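/- Let λ > 1, let A and B be complete metric spaces, let S : A → A be a λ-expansion and T : B → B a λ⁻¹-contraction, and let Φ(a, b) = (S a, T b) on A × B with the sup metric. Let G : A × B → A × B be a homeomorphism with sup_z dist(G z, Φ z) < ∞, and let H be the unique map with H ∘ G = Φ ∘ H and sup_z dist(H z, z) < ∞. If I : A × B → A × B is a bijective isometry satisfying I ∘ Φ = Φ ∘ I and I ∘ G = G ∘ I, then I ∘ H = H ∘ I. -/

import Mathlib

/-! Both `I ∘ H` and `H ∘ I` semiconjugate `G` to `Φ`, and since `I` is an isometry they are
at distance at most `2 C` from each other. The distance between their first coordinates is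
multiplied by `lam` along `G`, and the distance between their second coordinates is multiplied
by `lam` along `G⁻¹`. A bounded quantity growing geometrically vanishes
(`eq_zero_of_bounded_of_scaling`), so the two maps agree. -/

theorem eq_zero_of_bounded_of_scaling {X : Type*} {lam C : ℝ} (hlam : 1 < lam)
    (f : X → X) (u : X → ℝ) (hu : ∀ z, 0 ≤ u z) (hC : ∀ z, u z ≤ C)
    (hf : ∀ z, u (f z) = lam * u z) (z : X) : u z = 0 := by
  have key : ∀ n : ℕ, u (f^[n] z) = lam ^ n * u z := by
    intro n
    induction n with
    | zero => simp
    | succ n ih => rw [Function.iterate_succ_apply', hf, ih]; ring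
  by_contra hne
  have hpos : 0 < u z := lt_of_le_of_ne (hu z) (Ne.symm hne)
  obtain ⟨n, hn⟩ := pow_unbounded_of_one_lt (C / u z) hlam
  rw [div_lt_iff₀ hpos, ← key n] at hn
  exact absurd (hC _) (not_le.mpr hn)

/-- equivariance of the shadowing semiconjugacy: if a bijective isometry I
commutes with both the split hyperbolic homeomorphism Φ and the homeomorphism G (at
bounded distance from Φ), then I commutes with the semiconjugacy H (the unique map
with H ∘ G = Φ ∘ H at bounded distance from the identity). -/
theorem semiconjugacy_equivariance
    {A B : Type*} [MetricSpace A] [CompleteSpace A] [MetricSpace B] [CompleteSpace B]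
    (lam : ℝ) (hlam : 1 < lam) (S : Equiv.Perm A) (T : Equiv.Perm B)
    (hS : ∀ x y : A, dist (S x) (S y) = lam * dist x y)
    (hT : ∀ x y : B, dist (T x) (T y) = lam⁻¹ * dist x y)
    (Φ : Equiv.Perm (A × B)) (hΦ : ∀ p : A × B, Φ p = (S p.1, T p.2))
    (G : (A × B) ≃ₜ (A × B))
    (hG : ∃ δ : ℝ, ∀ z : A × B, dist (G z) (Φ z) ≤ δ)
    (H : A × B → A × B)
    (hH : ∀ z, H (G z) = Φ (H z))
    (hHb : ∃ C : ℝ, ∀ z, dist (H z) z ≤ C)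
    (I : Equiv.Perm (A × B)) (hI : Isometry I)
    (hIΦ : ∀ z, I (Φ z) = Φ (I z)) (hIG : ∀ z, I (G z) = G (I z)) :
    ∀ z, I (H z) = H (I z) := by
  obtain ⟨C, hC⟩ := hHb
  have hbd : ∀ z, dist (I (H z)) (H (I z)) ≤ C + C := fun z =>
    calc dist (I (H z)) (H (I z)) ≤ dist (I (H z)) (I z) + dist (I z) (H (I z)) :=
          dist_triangle _ _ _
      _ ≤ C + C := by
          rw [hI.dist_eq, dist_comm (I z)]
          exact add_le_add (hC z) (hC (I z))
  have hK : ∀ z, I (H (G z)) = (S (I (H z)).1, T (I (H z)).2) := fun z => by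
    rw [hH, hIΦ, hΦ]
  have hL : ∀ z, H (I (G z)) = (S (H (I z)).1, T (H (I z)).2) := fun z => by
    rw [hIG, hH, hΦ]
  intro z
  have h1 := eq_zero_of_bounded_of_scaling hlam G
    (fun z => dist (I (H z)).1 (H (I z)).1) (fun _ => dist_nonneg)
    (fun z => (le_max_left _ _).trans (hbd z))
    (fun z => by simp only [hK, hL, hS]) z
  have h2 := eq_zero_of_bounded_of_scaling hlam G.symm
    (fun z => dist (I (H z)).2 (H (I z)).2) (fun _ => dist_nonneg)
    (fun z => (le_max_right _ _).trans (hbd z))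
    (fun z => by
      obtain ⟨w, rfl⟩ := G.surjective z
      simp only [hK, hL, hT, G.symm_apply_apply]
      rw [mul_inv_cancel_left₀ (by positivity)]) z
  exact Prod.ext (dist_eq_zero.mp h1) (dist_eq_zero.mp h2)
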